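/- There is no pair (i,j) with 1 ≤ i < j ≤ n such that blk(i) ≠ blk(j), v_i − v_j ≤ −1, and v^{(i,j)}_a ≠ v^{(i,j)}_b for all a < b with blk(a) = blk(b). (This says that the set Š°_μ of Lemma 4.4 is empty.) -/

import Mathlib

open Finset

noncomputable section

/-- Sum of the first `j` block sizes (blocks are 1-indexed); `blkSum c j` is also the largest
element `ς_j` of the `j`-th block `C_j`. -/
def blkSum (c : ℕ → ℕ) (j : ℕ) : ℕ := ∑ i ∈ Finset.Icc 1 j, c i

/-- Block index of `a ∈ {1,…,n}`: the least `j` with `a ≤ c 1 + ⋯ + c j`. -/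
def blk (c : ℕ → ℕ) (a : ℕ) : ℕ := sInf {j | a ≤ blkSum c j}

/-!
On each block `v` takes the consecutive values `t - |C_j| < x ≤ t`, where `t = t_j` is its value at
the first position of `C_j`. If swapping `v i < v j`, with `i` in an earlier block than `j`, keeps
`v` injective on both blocks, then `v j` lies above the interval of the block of `i` and `v i` below
that of the block of `j`; so both ends of the interval move strictly up from the first block to the
second. By the recursion for `b`, `t_j - max c c_j` never increases with `j`. The upper
end can then move up only if the block gets longer and its length exceeds `c`, and in that case the
lower end does not move up.
-/

theorem notMem_image_of_injOn_comp_swap {α β : Type*} [DecidableEq α] {f : α → β} {s : Set α}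
    {i j : α} (hinj : Set.InjOn (f ∘ Equiv.swap i j) s) (hi : i ∈ s) (hj : j ∉ s)
    (hne : f i ≠ f j) : f j ∉ f '' s := by
  rintro ⟨k, hk, hkj⟩
  have hk_ne_i : k ≠ i := fun h => hne (h ▸ hkj)
  have hk_ne_j : k ≠ j := fun h => hj (h ▸ hk)
  refine hk_ne_i (hinj hk hi ?_)
  simp only [Function.comp_apply, Equiv.swap_apply_of_ne_of_ne hk_ne_i hk_ne_j,
    Equiv.swap_apply_left, hkj]

theorem Ioc_endpoints_lt_of_mem_of_notMem {α : Type*} [LinearOrder α] {a b a' b' x y : α}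
    (hxy : x < y) (hx : x ∈ Set.Ioc a b) (hy : y ∈ Set.Ioc a' b') (hy' : y ∉ Set.Ioc a b)
    (hx' : x ∉ Set.Ioc a' b') : a < a' ∧ b < b' := by
  have hby : b < y := by
    by_contra! h
    exact hy' ⟨hx.1.trans hxy, h⟩
  have hxa : x ≤ a' := by
    by_contra! h
    exact hx' ⟨h, hxy.le.trans hy.2⟩
  exact ⟨hx.1.trans_le hxa, hby.trans_le hy.2⟩

theorem eq_sub_of_forall_eq_succ_add_one {v : ℕ → ℤ} {m k : ℕ}
    (hv : ∀ a, m < a → a < m + k → v a = v (a + 1) + 1) {r : ℕ} (hr : r < k) :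
    v (m + 1 + r) = v (m + 1) - r := by
  induction r with
  | zero => simp
  | succ r ih =>
    have hstep := hv (m + 1 + r) (by lia) (by lia)
    rw [← add_assoc]
    push_cast
    linarith [ih (by lia)]

theorem image_Ioc_of_forall_eq_succ_add_one {v : ℕ → ℤ} {m k : ℕ}
    (hv : ∀ a, m < a → a < m + k → v a = v (a + 1) + 1) :
    v '' Set.Ioc m (m + k) = Set.Ioc (v (m + 1) - k) (v (m + 1)) := by
  ext x
  constructor
  · rintro ⟨a, ⟨hma, hak⟩, rfl⟩
    obtain ⟨r, rfl⟩ := Nat.exists_eq_add_of_le (Nat.succ_le_of_lt hma)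
    rw [Nat.succ_eq_add_one, eq_sub_of_forall_eq_succ_add_one hv (by lia), Set.mem_Ioc]
    lia
  · rintro ⟨hlow, hup⟩
    obtain ⟨r, hr⟩ := Int.eq_ofNat_of_zero_le (sub_nonneg.2 hup)
    have hrk : r < k := by lia
    refine ⟨m + 1 + r, ⟨by lia, by lia⟩, ?_⟩
    rw [eq_sub_of_forall_eq_succ_add_one hv hrk]
    lia

section Blocks

variable {c : ℕ → ℕ} {a p l : ℕ}

/-- The block `C_{p+1}`; the index is shifted so that its lower end needs no subtraction. -/
def block (c : ℕ → ℕ) (p : ℕ) : Set ℕ := Set.Ioc (blkSum c p) (blkSum c (p + 1))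

theorem blkSum_succ (c : ℕ → ℕ) (p : ℕ) : blkSum c (p + 1) = blkSum c p + c (p + 1) :=
  Finset.sum_Icc_succ_top (Nat.le_add_left 1 p) c

theorem blkSum_mono (c : ℕ → ℕ) : Monotone (blkSum c) :=
  monotone_nat_of_le_succ fun p => (blkSum_succ c p).symm ▸ Nat.le_add_right _ _

theorem blk_eq_succ_iff_mem_block : blk c a = p + 1 ↔ a ∈ block c p := by
  rw [blk, Nat.sInf_upward_closed_eq_succ_iff fun _ _ hjk haj => haj.trans (blkSum_mono c hjk)]
  simp only [Set.mem_ofPred_eq, not_le, block, Set.mem_Ioc, and_comm]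

theorem blk_le_blk {a' : ℕ} (haa' : a ≤ a') (ha' : a' ≤ blkSum c l) : blk c a ≤ blk c a' :=
  csInf_le_csInf (OrderBot.bddBelow _) ⟨l, ha'⟩ fun _ => haa'.trans

theorem exists_mem_block (ha : 1 ≤ a) (hal : a ≤ blkSum c l) : ∃ p < l, a ∈ block c p := by
  have hle : blk c a ≤ l := Nat.sInf_le hal
  have hne : blk c a ≠ 0 := fun h => by
    have h0 : a ≤ blkSum c 0 := h ▸ Nat.sInf_mem (s := {j | a ≤ blkSum c j}) ⟨l, hal⟩
    exact ha.not_gt (Nat.lt_one_iff.2 (Nat.le_zero.1 h0))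
  obtain ⟨p, hp⟩ := Nat.exists_eq_succ_of_ne_zero hne
  exact ⟨p, by lia, blk_eq_succ_iff_mem_block.1 hp⟩

theorem injOn_block_of_forall_ne {β : Type*} {f : ℕ → β}
    (hf : ∀ a a', 1 ≤ a → a < a' → a' ≤ blkSum c l → blk c a = blk c a' → f a ≠ f a')
    (hp : p < l) : Set.InjOn f (block c p) :=
  Set.injOn_iff_injective.2 <| .of_lt_imp_ne fun a a' hlt =>
    hf a a' (Nat.one_le_of_lt a.2.1) hlt (a'.2.2.trans (blkSum_mono c hp))
      ((blk_eq_succ_iff_mem_block.2 a.2).trans (blk_eq_succ_iff_mem_block.2 a'.2).symm)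

end Blocks

section Values

variable {c : ℕ → ℕ} {v : ℕ → ℤ} {l p : ℕ}

/-- The value of `v` at the first position of the block `C_{p+1}` (its largest value there when `v`
decreases along blocks). -/
def blockTop (c : ℕ → ℕ) (v : ℕ → ℤ) (p : ℕ) : ℤ := v (blkSum c p + 1)

theorem eq_succ_add_one_of_mem_block
    (hv : ∀ a, 1 ≤ a → a < blkSum c l → blk c a = blk c (a + 1) → v a = v (a + 1) + 1)
    (hp : p < l) (a : ℕ) (ha : blkSum c p < a) (ha' : a < blkSum c p + c (p + 1)) :
    v a = v (a + 1) + 1 := by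
  rw [← blkSum_succ] at ha'
  have hmem : a ∈ block c p := ⟨ha, ha'.le⟩
  have hmem_succ : a + 1 ∈ block c p := ⟨ha.trans a.lt_succ_self, ha'⟩
  exact hv a (Nat.one_le_of_lt ha) (ha'.trans_le (blkSum_mono c hp))
    ((blk_eq_succ_iff_mem_block.2 hmem).trans (blk_eq_succ_iff_mem_block.2 hmem_succ).symm)

theorem image_block
    (hv : ∀ a, 1 ≤ a → a < blkSum c l → blk c a = blk c (a + 1) → v a = v (a + 1) + 1)
    (hp : p < l) :
    v '' block c p = Set.Ioc (blockTop c v p - c (p + 1)) (blockTop c v p) := by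
  rw [block, blkSum_succ]
  exact image_Ioc_of_forall_eq_succ_add_one (eq_succ_add_one_of_mem_block hv hp)

theorem apply_blkSum_succ
    (hv : ∀ a, 1 ≤ a → a < blkSum c l → blk c a = blk c (a + 1) → v a = v (a + 1) + 1)
    (hp : p < l) (hpos : 0 < c (p + 1)) :
    v (blkSum c (p + 1)) = blockTop c v p - c (p + 1) + 1 := by
  have hlast := eq_sub_of_forall_eq_succ_add_one (eq_succ_add_one_of_mem_block hv hp)
    (Nat.sub_one_lt_of_lt hpos)
  rw [show blkSum c p + 1 + (c (p + 1) - 1) = blkSum c (p + 1) by rw [blkSum_succ]; lia] at hlast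
  rw [hlast, blockTop]
  lia

theorem blockTop_sub_max_le {q : ℕ} {d : ℤ} (hc : ∀ j ∈ Finset.Icc 1 l, 0 < c j)
    (hv : ∀ a, 1 ≤ a → a < blkSum c l → blk c a = blk c (a + 1) → v a = v (a + 1) + 1)
    (hjump : ∀ j, 1 ≤ j → j < l →
      v (blkSum c j + 1) - v (blkSum c j) < c j + max d (c (j + 1)) - max d (c j))
    (hpq : p ≤ q) (hq : q < l) :
    blockTop c v q - max d (c (q + 1)) ≤ blockTop c v p - max d (c (p + 1)) := by
  induction q, hpq using Nat.le_induction with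
  | base => exact le_rfl
  | succ q _ ih =>
    have hlast := apply_blkSum_succ hv (Nat.lt_of_succ_lt hq)
      (hc (q + 1) (Finset.mem_Icc.2 ⟨by lia, hq.le⟩))
    have hjump_q := hjump (q + 1) (by lia) hq
    rw [hlast] at hjump_q
    refine le_trans ?_ (ih (Nat.lt_of_succ_lt hq))
    rw [blockTop]
    lia

end Values

theorem S_mu_check_regular_empty_general
    (l : ℕ) (c : ℕ → ℕ) (hc : ∀ i ∈ Finset.Icc 1 l, 0 < c i) (d : ℤ) (v : ℕ → ℤ)
    (hvsame : ∀ i, 1 ≤ i → i < blkSum c l → blk c i = blk c (i + 1) → v i = v (i + 1) + 1)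
    (hvjump : ∀ j, 1 ≤ j → j < l →
      v (blkSum c j + 1) - v (blkSum c j) < c j + max d (c (j + 1)) - max d (c j)) :
    ¬ ∃ i j, 1 ≤ i ∧ i < j ∧ j ≤ blkSum c l ∧ blk c i ≠ blk c j ∧ v i - v j ≤ -1 ∧
        (∀ a a', 1 ≤ a → a < a' → a' ≤ blkSum c l → blk c a = blk c a' →
          (v ∘ Equiv.swap i j) a ≠ (v ∘ Equiv.swap i j) a') := by
  rintro ⟨i, j, hi, hij, hjn, hblk, hvij, hreg⟩
  obtain ⟨p, hp, hip⟩ := exists_mem_block hi (hij.le.trans hjn)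
  obtain ⟨q, hq, hjq⟩ := exists_mem_block (hi.trans hij.le) hjn
  have hblk_i := blk_eq_succ_iff_mem_block.2 hip
  have hblk_j := blk_eq_succ_iff_mem_block.2 hjq
  have hpq : p < q := by
    have := blk_le_blk hij.le hjn
    lia
  have hjp : j ∉ block c p := fun h => hblk (hblk_i.trans (blk_eq_succ_iff_mem_block.2 h).symm)
  have hiq : i ∉ block c q := fun h => hblk ((blk_eq_succ_iff_mem_block.2 h).trans hblk_j.symm)
  have hlt : v i < v j := by lia
  have hvj : v j ∉ v '' block c p :=
    notMem_image_of_injOn_comp_swap (injOn_block_of_forall_ne hreg hp) hip hjp hlt.ne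
  have hvi : v i ∉ v '' block c q :=
    notMem_image_of_injOn_comp_swap
      (Equiv.swap_comm i j ▸ injOn_block_of_forall_ne hreg hq) hjq hiq hlt.ne'
  have hvi_mem := Set.mem_image_of_mem v hip
  have hvj_mem := Set.mem_image_of_mem v hjq
  rw [image_block hvsame hp] at hvj hvi_mem
  rw [image_block hvsame hq] at hvi hvj_mem
  obtain ⟨hbot, htop⟩ := Ioc_endpoints_lt_of_mem_of_notMem hlt hvi_mem hvj_mem hvj hvi
  have hmax := blockTop_sub_max_le hc hvsame hvjump hpq.le hq
  have hmax_lt : max d (c (p + 1)) < max d (c (q + 1)) := by linarith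
  have hd_lt : d < c (q + 1) := by simpa using (le_max_left d _).trans_lt hmax_lt
  rw [max_eq_right hd_lt.le] at hmax
  linarith [le_max_right d (c (p + 1))]

theorem jump_lt_of_recurrence {l : ℕ} {c : ℕ → ℕ} {b v : ℕ → ℤ}
    (hb2 : b 2 = (max (c 1) (c 2) : ℕ) - 1)
    (hbj : ∀ j, 2 ≤ j → j ≤ l - 1 →
      b (j + 1) = (c j : ℤ) + (max (c 1) (c (j + 1)) : ℕ) - (max (c 1) (c j) : ℕ))
    (hvjump : ∀ j, 1 ≤ j → j < l →
      v (blkSum c j) = v (blkSum c j + 1) - (b (j + 1) - 1)) (j : ℕ) (hj : 1 ≤ j) (hjl : j < l) :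
    v (blkSum c j + 1) - v (blkSum c j) <
      c j + max (c 1 : ℤ) (c (j + 1)) - max (c 1 : ℤ) (c j) := by
  have hv := hvjump j hj hjl
  rcases hj.eq_or_lt with rfl | hj2
  · push_cast at hb2
    rw [max_self]
    lia
  · have hb := hbj j hj2 (Nat.le_sub_one_of_lt hjl)
    push_cast at hb
    lia

/-- Lemma 4.4: `Š°_μ = ∅`.  With `v` encoding `μ + ρ` (so that
`(μ+ρ, ε_i - ε_j) = v i - v j`), there is no pair `(i,j)`, `i < j`, with
`ε_i - ε_j ∉ R_I`, `(μ+ρ, ε_i-ε_j) ≤ -1`, and `s_{ε_i-ε_j}(μ+ρ)` regular for `I`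
(the swapped `v` injective on each block). -/
theorem S_mu_check_regular_empty
    (l : ℕ) (hl : 2 ≤ l) (c : ℕ → ℕ) (hc : ∀ i ∈ Finset.Icc 1 l, 0 < c i)
    (hcl : c l = c 1) (hcne : ∀ j, 1 < j → j < l → c j ≠ c 1)
    (n : ℕ) (hn : n = blkSum c l)
    (b : ℕ → ℤ) (hb2 : b 2 = (max (c 1) (c 2) : ℕ) - 1)
    (hbj : ∀ j, 2 ≤ j → j ≤ l - 1 →
      b (j + 1) = (c j : ℤ) + (max (c 1) (c (j + 1)) : ℕ) - (max (c 1) (c j) : ℕ))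
    (v : ℕ → ℤ) (hvn : v n = 0)
    (hvsame : ∀ i, 1 ≤ i → i < n → blk c i = blk c (i + 1) → v i = v (i + 1) + 1)
    (hvjump : ∀ j, 1 ≤ j → j < l →
      v (blkSum c j) = v (blkSum c j + 1) - (b (j + 1) - 1)) :
    ¬ ∃ i j, 1 ≤ i ∧ i < j ∧ j ≤ n ∧ blk c i ≠ blk c j ∧ v i - v j ≤ -1 ∧
        (∀ a a', 1 ≤ a → a < a' → a' ≤ n → blk c a = blk c a' →
          (v ∘ Equiv.swap i j) a ≠ (v ∘ Equiv.swap i j) a') := by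
  subst hn
  exact S_mu_check_regular_empty_general l c hc (c 1) v hvsame
    (jump_lt_of_recurrence hb2 hbj hvjump)

end
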